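/- arXiv:1109.4505 — 2 statements merged into one kernel-verified Lean document; each statement's English description precedes it below -/
import Mathlib

section
/- Let G be a finite group and ρ : G → Aut⁺(ℝⁿ) a positive representation. Then there exist a unique permutation representation π : G → S_n and an element m ∈ (ℝ_{>0})ⁿ such that ρ_s = m ∘ π_s ∘ m⁻¹ for all s ∈ G (where m⁻¹ denotes the diagonal operator of the pointwise inverse of m). Conversely, for any permutation representation π : G → S_n and any m ∈ (ℝ_{>0})ⁿ, the formula ρ_s = m ∘ π_s ∘ m⁻¹ defines a positive representation of G in ℝⁿ. -/
/-- The multiplicative group of positive real numbers. -/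
abbrev PosReal : Type := {x : ℝ // 0 < x}

/-- The diagonal (multiplication) operator on `ℝⁿ` associated with a strictly positive
vector `m`. -/
noncomputable def diagEquiv (n : ℕ) (m : Fin n → PosReal) :
    (Fin n → ℝ) ≃ₗ[ℝ] (Fin n → ℝ) where
  toFun x := fun i => (m i : ℝ) * x i
  invFun y := fun i => (m i : ℝ)⁻¹ * y i
  map_add' x y := funext fun i => by dsimp; ring
  map_smul' c x := funext fun i => by dsimp; ring
  left_inv x := funext fun i => by
    have h : (m i : ℝ) ≠ 0 := (m i).2.ne'
    dsimp; field_simp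
  right_inv y := funext fun i => by
    have h : (m i : ℝ) ≠ 0 := (m i).2.ne'
    dsimp; field_simp

/-- The permutation operator on `ℝⁿ` associated with `σ ∈ Sₙ`; it maps `e_i` to
`e_{σ(i)}`. -/
noncomputable def permEquiv (n : ℕ) (σ : Equiv.Perm (Fin n)) :
    (Fin n → ℝ) ≃ₗ[ℝ] (Fin n → ℝ) where
  toFun x := fun i => x (σ⁻¹ i)
  invFun y := fun i => y (σ i)
  map_add' _ _ := rfl
  map_smul' _ _ := rfl
  left_inv x := funext fun i => by simp
  right_inv y := funext fun i => by simp

/-- `Aut⁺(ℝⁿ)`: the group of lattice automorphisms of `ℝⁿ`, i.e. linear bijections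
that are order isomorphisms for the coordinatewise order. -/
noncomputable def latticeAut (n : ℕ) : Subgroup ((Fin n → ℝ) ≃ₗ[ℝ] (Fin n → ℝ)) where
  carrier := {T | ∀ x y : Fin n → ℝ, x ≤ y ↔ T x ≤ T y}
  one_mem' := fun x y => Iff.rfl
  mul_mem' := by
    intro a b ha hb x y
    exact (hb x y).trans (ha (b x) (b y))
  inv_mem' := by
    intro a ha x y
    have := ha (a.symm x) (a.symm y)
    simpa using this.symm

/-- The action of `Sₙ` on the group `(ℝ_{>0})ⁿ`, `σ(m)_i = m_{σ⁻¹(i)}`. -/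
noncomputable def permMulAut (n : ℕ) : Equiv.Perm (Fin n) →* MulAut (Fin n → PosReal) where
  toFun σ :=
    { toFun := fun m i => m (σ⁻¹ i)
      invFun := fun m i => m (σ i)
      left_inv := fun m => funext fun i => by simp
      right_inv := fun m => funext fun i => by simp
      map_mul' := fun m₁ m₂ => rfl }
  map_one' := by ext m i; simp
  map_mul' σ τ := by ext m i; simp [mul_comm]

/-!
The orbit sum `m = ∑ t, ρ t 1` is a strictly positive vector fixed by `ρ`, so after conjugation by
the diagonal operator of `m` one may assume that `ρ` fixes `1 = (1, …, 1)`. A lattice automorphism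
sends the standard basis to nonzero positive vectors that are pairwise disjoint (their infima
vanish). There are as many of them as coordinates, so each is supported at a single coordinate;
since they add up to `1`, the automorphism permutes the standard basis.
-/

theorem eq_of_pi_single_eq_pi_single {ι α : Type*} [DecidableEq ι] [Zero α] {i j : ι} {a b : α}
    (ha : a ≠ 0) (h : (Pi.single i a : ι → α) = Pi.single j b) : i = j := by
  by_contra hne
  have hi := congrFun h i
  rw [Pi.single_eq_same, Pi.single_eq_of_ne hne] at hi
  exact ha hi

theorem pi_single_inf_pi_single_of_ne {ι α : Type*} [DecidableEq ι] [SemilatticeInf α] [Zero α]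
    {i j : ι} (hij : i ≠ j) {a b : α} (ha : 0 ≤ a) (hb : 0 ≤ b) :
    (Pi.single i a ⊓ Pi.single j b : ι → α) = 0 := by
  ext k
  obtain rfl | hki := eq_or_ne k i
  · simp [hij, ha]
  · obtain rfl | hkj := eq_or_ne k j <;> simp [*]

theorem exists_perm_eq_single_of_pairwise_inf_eq_zero {ι α : Type*} [Finite ι] [DecidableEq ι]
    [LinearOrder α] [Zero α] {f : ι → ι → α} (hpos : ∀ i, 0 < f i)
    (hdisj : Pairwise fun i j => f i ⊓ f j = 0) :
    ∃ σ : Equiv.Perm ι, ∀ i, f i = Pi.single (σ i) (f i (σ i)) := by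
  choose τ hτ using fun i => (Pi.lt_def.1 (hpos i)).2
  have hvanish : ∀ {i j}, i ≠ j → f i (τ j) = 0 := fun {i j} hij =>
    have hmin : min (f i (τ j)) (f j (τ j)) = 0 := congrFun (hdisj hij) (τ j)
    (min_choice _ _).elim (fun h => h.symm.trans hmin)
      fun h => absurd (h.symm.trans hmin) (hτ j).ne'
  have hinj : Function.Injective τ := fun i j hij => by
    by_contra hne
    exact (hτ i).ne' (hij ▸ hvanish hne)
  let σ := Equiv.ofBijective τ (Finite.injective_iff_bijective.1 hinj)
  refine ⟨σ, fun i => funext fun k => ?_⟩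
  obtain ⟨j, rfl⟩ := σ.surjective k
  obtain rfl | hij := eq_or_ne i j
  · rw [Pi.single_eq_same]
  · rw [Pi.single_eq_of_ne (σ.injective.ne hij.symm)]
    exact hvanish hij

/-- The group of order-preserving linear automorphisms of an ordered module, order preservation
being required in both directions. For `E = ℝⁿ` this is `Aut⁺(ℝⁿ)`. -/
def orderLinearAut (R E : Type*) [Semiring R] [AddCommMonoid E] [Module R E] [Preorder E] :
    Subgroup (E ≃ₗ[R] E) where
  carrier := {T | ∀ x y, x ≤ y ↔ T x ≤ T y}
  one_mem' _ _ := Iff.rfl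
  mul_mem' {S T} hS hT x y := (hT x y).trans (hS (T x) (T y))
  inv_mem' {T} hT x y := show x ≤ y ↔ T.symm x ≤ T.symm y by
    rw [hT (T.symm x), T.apply_symm_apply, T.apply_symm_apply]

theorem map_inf_of_mem_orderLinearAut {R E : Type*} [Semiring R] [AddCommMonoid E] [Module R E]
    [SemilatticeInf E] {T : E ≃ₗ[R] E} (hT : T ∈ orderLinearAut R E) (x y : E) :
    T (x ⊓ y) = T x ⊓ T y :=
  OrderIso.map_inf ⟨T.toEquiv, (hT _ _).symm⟩ x y

theorem map_pos_of_mem_orderLinearAut {R E : Type*} [Semiring R] [AddCommMonoid E] [Module R E]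
    [PartialOrder E] {T : E ≃ₗ[R] E} (hT : T ∈ orderLinearAut R E) {x : E} (hx : 0 < x) :
    0 < T x := by
  simpa only [map_zero] using (show StrictMono T from strictMono_of_le_iff_le hT) hx

theorem exists_ge_forall_map_eq {G R E : Type*} [Group G] [Finite G] [Semiring R]
    [AddCommMonoid E] [PartialOrder E] [IsOrderedAddMonoid E] [Module R E]
    (ρ : G →* (E ≃ₗ[R] E)) {x₀ : E} (hx₀ : ∀ s, 0 ≤ ρ s x₀) :
    ∃ x, x₀ ≤ x ∧ ∀ s, ρ s x = x := by
  have := Fintype.ofFinite G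
  refine ⟨∑ t, ρ t x₀, ?_, fun s => ?_⟩
  · calc x₀ = ρ 1 x₀ := by rw [map_one, LinearEquiv.coe_one, id]
      _ ≤ ∑ t, ρ t x₀ := Finset.single_le_sum (fun t _ => hx₀ t) (Finset.mem_univ 1)
  · calc ρ s (∑ t, ρ t x₀) = ∑ t, ρ (s * t) x₀ := by
          simp only [map_sum, map_mul, LinearEquiv.mul_apply]
      _ = ∑ t, ρ t x₀ := Equiv.sum_comp (Equiv.mulLeft s) fun t => ρ t x₀

section PermutationOperators

variable {R ι : Type*} [Semiring R]

/-- The permutation operators on `ι → R`, as a homomorphism from the symmetric group: `σ` acts by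
`(σ x) i = x (σ⁻¹ i)`, so that it sends `e_i` to `e_{σ i}`. -/
def permOperator (R ι : Type*) [Semiring R] : Equiv.Perm ι →* ((ι → R) ≃ₗ[R] (ι → R)) where
  toFun σ := LinearEquiv.funCongrLeft R R σ⁻¹
  map_one' := rfl
  map_mul' _ _ := rfl

theorem permOperator_apply (σ : Equiv.Perm ι) (x : ι → R) (i : ι) :
    permOperator R ι σ x i = x (σ⁻¹ i) :=
  rfl

theorem permOperator_single [DecidableEq ι] (σ : Equiv.Perm ι) (i : ι) (a : R) :
    permOperator R ι σ (Pi.single i a) = Pi.single (σ i) a := by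
  ext k
  simp only [permOperator_apply, Pi.single_apply, Equiv.Perm.inv_eq_iff_eq]

theorem permOperator_injective [Nontrivial R] : Function.Injective (permOperator R ι) := by
  classical
  intro σ τ hστ
  ext i
  have h : (Pi.single (σ i) 1 : ι → R) = Pi.single (τ i) 1 := by
    rw [← permOperator_single, hστ, permOperator_single]
  exact eq_of_pi_single_eq_pi_single one_ne_zero h

theorem permOperator_mem_orderLinearAut [Preorder R] (σ : Equiv.Perm ι) :
    permOperator R ι σ ∈ orderLinearAut R (ι → R) :=
  fun _ _ => σ⁻¹.surjective.forall

end PermutationOperators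

section PositiveDiagonal

variable {𝕜 ι : Type*} [Semifield 𝕜] [LinearOrder 𝕜]

/-- The diagonal operator `x ↦ (m i * x i)` of a strictly positive weight `m`. -/
def diagOperator (m : ι → {a : 𝕜 // 0 < a}) : (ι → 𝕜) ≃ₗ[𝕜] (ι → 𝕜) :=
  LinearEquiv.piCongrRight fun i => LinearEquiv.smulOfUnit (Units.mk0 (m i : 𝕜) (m i).2.ne')

theorem diagOperator_mem_orderLinearAut [IsStrictOrderedRing 𝕜] (m : ι → {a : 𝕜 // 0 < a}) :
    diagOperator m ∈ orderLinearAut 𝕜 (ι → 𝕜) :=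
  fun _ _ => forall_congr' fun i => (mul_le_mul_iff_right₀ (m i).2).symm

theorem diagOperator_conj_permOperator_single [DecidableEq ι] (m : ι → {a : 𝕜 // 0 < a})
    (σ : Equiv.Perm ι) (i : ι) (a : 𝕜) :
    (diagOperator m * permOperator 𝕜 ι σ * (diagOperator m)⁻¹) (Pi.single i a) =
      Pi.single (σ i) (m (σ i) * ((m i : 𝕜)⁻¹ * a)) := by
  have hinv : (diagOperator m)⁻¹ (Pi.single i a) = Pi.single i ((m i : 𝕜)⁻¹ * a) :=
    (Pi.single_op (fun j b => (m j : 𝕜)⁻¹ * b) (fun _ => mul_zero _) i a).symm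
  rw [LinearEquiv.mul_apply, hinv, LinearEquiv.mul_apply, permOperator_single]
  exact (Pi.single_op (fun j b => (m j : 𝕜) * b) (fun _ => mul_zero _) _ _).symm

theorem perm_eq_of_diagOperator_conj_eq {m m' : ι → {a : 𝕜 // 0 < a}} {σ τ : Equiv.Perm ι}
    (h : diagOperator m * permOperator 𝕜 ι σ * (diagOperator m)⁻¹ =
      diagOperator m' * permOperator 𝕜 ι τ * (diagOperator m')⁻¹) : σ = τ := by
  classical
  ext i
  have hsingle := LinearEquiv.congr_fun h (Pi.single i 1)
  rw [diagOperator_conj_permOperator_single, diagOperator_conj_permOperator_single] at hsingle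
  refine eq_of_pi_single_eq_pi_single ?_ hsingle
  exact mul_ne_zero (m _).2.ne' (mul_ne_zero (inv_ne_zero (m _).2.ne') one_ne_zero)

end PositiveDiagonal

section PositiveRepresentations

variable {G 𝕜 ι : Type*} [Group G] [Semifield 𝕜] [LinearOrder 𝕜] [IsStrictOrderedRing 𝕜]

theorem exists_permOperator_eq_of_map_one_eq_one [Finite ι] {T : (ι → 𝕜) ≃ₗ[𝕜] (ι → 𝕜)}
    (hT : T ∈ orderLinearAut 𝕜 (ι → 𝕜)) (hT1 : T 1 = 1) :
    ∃ σ, permOperator 𝕜 ι σ = T := by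
  classical
  have := Fintype.ofFinite ι
  have hdisj : Pairwise fun i j => T (Pi.single i 1) ⊓ T (Pi.single j 1) = 0 := fun i j hij => by
    change T (Pi.single i 1) ⊓ T (Pi.single j 1) = 0
    rw [← map_inf_of_mem_orderLinearAut hT, pi_single_inf_pi_single_of_ne hij zero_le_one
      zero_le_one, map_zero]
  obtain ⟨σ, hσ⟩ := exists_perm_eq_single_of_pairwise_inf_eq_zero
    (fun i => map_pos_of_mem_orderLinearAut hT (Pi.single_pos.2 one_pos)) hdisj
  have hsum : ∑ j, Pi.single j 1 = (1 : ι → 𝕜) := Finset.univ_sum_single 1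
  have hcoeff : ∀ i, T (Pi.single i 1) (σ i) = 1 := fun i =>
    calc T (Pi.single i 1) (σ i) = ∑ j, T (Pi.single j 1) (σ i) := by
          rw [Fintype.sum_eq_single i]
          intro j hj
          rw [hσ j, Pi.single_eq_of_ne (σ.injective.ne hj.symm)]
      _ = T (∑ j, Pi.single j 1) (σ i) := by rw [map_sum, Finset.sum_apply]
      _ = 1 := by rw [hsum, hT1, Pi.one_apply]
  refine ⟨σ, LinearEquiv.toLinearMap_injective ((Pi.basisFun 𝕜 ι).ext fun i => ?_)⟩
  rw [Pi.basisFun_apply, LinearEquiv.coe_coe, LinearEquiv.coe_coe, permOperator_single, hσ i,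
    hcoeff i]

theorem exists_permOperator_comp_eq_of_map_one_eq_one [Finite ι]
    {ρ : G →* ((ι → 𝕜) ≃ₗ[𝕜] (ι → 𝕜))} (hρ : ∀ s, ρ s ∈ orderLinearAut 𝕜 (ι → 𝕜))
    (hρ1 : ∀ s, ρ s 1 = 1) :
    ∃ π : G →* Equiv.Perm ι, ∀ s, permOperator 𝕜 ι (π s) = ρ s := by
  choose π hπ using fun s => exists_permOperator_eq_of_map_one_eq_one (hρ s) (hρ1 s)
  refine ⟨MonoidHom.mk' π fun s t => permOperator_injective (R := 𝕜) ?_, hπ⟩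
  rw [map_mul, hπ, hπ, hπ, map_mul]

theorem exists_pos_forall_map_eq [Finite G] {ρ : G →* ((ι → 𝕜) ≃ₗ[𝕜] (ι → 𝕜))}
    (hρ : ∀ s, ρ s ∈ orderLinearAut 𝕜 (ι → 𝕜)) :
    ∃ m : ι → {a : 𝕜 // 0 < a}, ∀ s, ρ s (fun i => m i) = fun i => (m i : 𝕜) := by
  have hone_nonneg : ∀ s, 0 ≤ ρ s 1 := fun s => by
    simpa only [map_zero] using (hρ s 0 1).1 zero_le_one
  obtain ⟨m, hm, hfix⟩ := exists_ge_forall_map_eq ρ hone_nonneg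
  exact ⟨fun i => ⟨m i, one_pos.trans_le (hm i)⟩, hfix⟩

theorem exists_eq_diagOperator_conj_permOperator [Finite ι]
    {ρ : G →* ((ι → 𝕜) ≃ₗ[𝕜] (ι → 𝕜))} (hρ : ∀ s, ρ s ∈ orderLinearAut 𝕜 (ι → 𝕜))
    {m : ι → {a : 𝕜 // 0 < a}} (hm : ∀ s, ρ s (fun i => m i) = fun i => (m i : 𝕜)) :
    ∃ π : G →* Equiv.Perm ι,
      ∀ s, ρ s = diagOperator m * permOperator 𝕜 ι (π s) * (diagOperator m)⁻¹ := by
  have hdiag : diagOperator m 1 = fun i => (m i : 𝕜) := funext fun i => mul_one _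
  let ρ' := (MulAut.conj (diagOperator m)⁻¹).toMonoidHom.comp ρ
  have hρ'_apply : ∀ s, ρ' s = (diagOperator m)⁻¹ * ρ s * diagOperator m := fun _ => rfl
  have hρ'_mem : ∀ s, ρ' s ∈ orderLinearAut 𝕜 (ι → 𝕜) := fun s =>
    mul_mem (mul_mem (inv_mem (diagOperator_mem_orderLinearAut m)) (hρ s))
      (diagOperator_mem_orderLinearAut m)
  have hρ'_one : ∀ s, ρ' s 1 = 1 := fun s => by
    rw [hρ'_apply, LinearEquiv.mul_apply, LinearEquiv.mul_apply, hdiag, hm, ← hdiag]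
    exact (diagOperator m).symm_apply_apply 1
  obtain ⟨π, hπ⟩ := exists_permOperator_comp_eq_of_map_one_eq_one hρ'_mem hρ'_one
  refine ⟨π, fun s => ?_⟩
  rw [hπ, hρ'_apply]
  group

theorem diagOperator_conj_permOperator_mem_orderLinearAut (m : ι → {a : 𝕜 // 0 < a})
    (σ : Equiv.Perm ι) :
    diagOperator m * permOperator 𝕜 ι σ * (diagOperator m)⁻¹ ∈ orderLinearAut 𝕜 (ι → 𝕜) :=
  mul_mem (mul_mem (diagOperator_mem_orderLinearAut m) (permOperator_mem_orderLinearAut σ))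
    (inv_mem (diagOperator_mem_orderLinearAut m))

theorem stmt12_general [Finite G] [Finite ι] :
    (∀ ρ : G →* ((ι → 𝕜) ≃ₗ[𝕜] (ι → 𝕜)), (∀ s, ρ s ∈ orderLinearAut 𝕜 (ι → 𝕜)) →
      ∃! π : G →* Equiv.Perm ι, ∃ m : ι → {a : 𝕜 // 0 < a},
        ∀ s, ρ s = diagOperator m * permOperator 𝕜 ι (π s) * (diagOperator m)⁻¹) ∧
    (∀ (π : G →* Equiv.Perm ι) (m : ι → {a : 𝕜 // 0 < a}),
      ∃ ρ : G →* ((ι → 𝕜) ≃ₗ[𝕜] (ι → 𝕜)),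
        (∀ s, ρ s = diagOperator m * permOperator 𝕜 ι (π s) * (diagOperator m)⁻¹) ∧
        ∀ s, ρ s ∈ orderLinearAut 𝕜 (ι → 𝕜)) := by
  refine ⟨fun ρ hρ => ?_, fun π m => ?_⟩
  · obtain ⟨m, hm⟩ := exists_pos_forall_map_eq hρ
    obtain ⟨π, hπ⟩ := exists_eq_diagOperator_conj_permOperator hρ hm
    refine ⟨π, ⟨m, hπ⟩, ?_⟩
    rintro π' ⟨m', hπ'⟩
    exact MonoidHom.ext fun s => perm_eq_of_diagOperator_conj_eq ((hπ' s).symm.trans (hπ s))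
  · exact ⟨(MulAut.conj (diagOperator m)).toMonoidHom.comp ((permOperator 𝕜 ι).comp π),
      fun _ => rfl, fun s => diagOperator_conj_permOperator_mem_orderLinearAut m (π s)⟩

end PositiveRepresentations

/-- Every positive representation `ρ` of a finite group `G` in `ℝⁿ` is of the form
`ρ_s = m ∘ π_s ∘ m⁻¹` for a unique permutation representation `π : G → Sₙ` and some
`m ∈ (ℝ_{>0})ⁿ`; conversely every such formula defines a positive representation. -/
theorem stmt12 {G : Type*} [Group G] [Finite G] (n : ℕ) :
    (∀ ρ : G →* ((Fin n → ℝ) ≃ₗ[ℝ] (Fin n → ℝ)),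
      (∀ (s : G) (x y : Fin n → ℝ), x ≤ y ↔ ρ s x ≤ ρ s y) →
      ∃! π : G →* Equiv.Perm (Fin n), ∃ m : Fin n → PosReal,
        ∀ s : G, ρ s = diagEquiv n m * permEquiv n (π s) * (diagEquiv n m)⁻¹) ∧
    (∀ (π : G →* Equiv.Perm (Fin n)) (m : Fin n → PosReal),
      ∃ ρ : G →* ((Fin n → ℝ) ≃ₗ[ℝ] (Fin n → ℝ)),
        (∀ s : G, ρ s = diagEquiv n m * permEquiv n (π s) * (diagEquiv n m)⁻¹) ∧
        ∀ (s : G) (x y : Fin n → ℝ), x ≤ y ↔ ρ s x ≤ ρ s y) :=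
  stmt12_general
end

section
/- Let G be a finite group and let ρ¹, ρ² : G → Aut⁺(ℝⁿ) be positive representations with ρ¹_s = m₁ ∘ π¹_s ∘ m₁⁻¹ and ρ²_s = m₂ ∘ π²_s ∘ m₂⁻¹ for all s ∈ G, where m₁, m₂ ∈ (ℝ_{>0})ⁿ and π¹, π² : G → S_n are permutation representations. Then ρ¹ and ρ² are order equivalent if and only if π¹ and π² are permutation equivalent, i.e., there exists σ ∈ S_n with σ ∘ π²_s = π¹_s ∘ σ for all s ∈ G. -/
/-!
The atoms of the Riesz space `ℝⁿ` are the positive multiples of basis vectors, and a lattice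
isomorphism permutes atoms. So every lattice isomorphism has a well-defined permutation part, which
is multiplicative. The permutation part of `m ∘ π_s ∘ m⁻¹` is `π_s`, so that of an intertwiner of
`ρ²` and `ρ¹` intertwines `π²` and `π¹`. Conversely, if `σ` intertwines `π²` and `π¹`, then
`m₁ ∘ σ ∘ m₂⁻¹` is a lattice isomorphism intertwining `ρ²` and `ρ¹`.
-/

section CoordinateSpaces

variable {ι κ μ 𝕜 : Type*}

section LatticeIso

variable {E F H : Type*} [Semiring 𝕜] [AddCommMonoid E] [AddCommMonoid F] [AddCommMonoid H]
  [Module 𝕜 E] [Module 𝕜 F] [Module 𝕜 H] [Preorder E] [Preorder F] [Preorder H]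

/-- A linear bijection is a lattice isomorphism when it preserves and reflects the order.
Between Riesz spaces such a map automatically preserves suprema and infima. -/
def IsLatticeIso (T : E ≃ₗ[𝕜] F) : Prop :=
  ∀ x y, x ≤ y ↔ T x ≤ T y

namespace IsLatticeIso

theorem symm {T : E ≃ₗ[𝕜] F} (hT : IsLatticeIso T) : IsLatticeIso T.symm := fun x y => by
  rw [hT, T.apply_symm_apply, T.apply_symm_apply]

theorem trans {S : E ≃ₗ[𝕜] F} {T : F ≃ₗ[𝕜] H} (hS : IsLatticeIso S) (hT : IsLatticeIso T) :
    IsLatticeIso (S.trans T) :=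
  fun x y => (hS x y).trans (hT (S x) (S y))

theorem lt_iff_lt {T : E ≃ₗ[𝕜] F} (hT : IsLatticeIso T) {x y : E} : x < y ↔ T x < T y := by
  rw [lt_iff_le_not_ge, lt_iff_le_not_ge, hT x y, hT y x]

end IsLatticeIso

variable (𝕜) in
/-- An atom of an ordered vector space, in the sense of Riesz space theory: a positive vector
whose order interval `[0, x]` consists of multiples of `x`. This is not the order-theoretic
`IsAtom`, which asks for a minimal element above `⊥`. -/
def IsRieszAtom (x : E) : Prop :=
  0 < x ∧ ∀ y, 0 ≤ y → y ≤ x → ∃ c : 𝕜, y = c • x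

theorem IsRieszAtom.map {T : E ≃ₗ[𝕜] F} (hT : IsLatticeIso T) {x : E} (hx : IsRieszAtom 𝕜 x) :
    IsRieszAtom 𝕜 (T x) := by
  refine ⟨by simpa only [map_zero] using hT.lt_iff_lt.1 hx.1, fun y hy₀ hyx => ?_⟩
  have h₀ : 0 ≤ T.symm y := by simpa only [map_zero] using (hT.symm 0 y).1 hy₀
  have h₁ : T.symm y ≤ x := by simpa only [T.symm_apply_apply] using (hT.symm y (T x)).1 hyx
  obtain ⟨c, hc⟩ := hx.2 _ h₀ h₁
  exact ⟨c, by rw [← map_smul, ← hc, T.apply_symm_apply]⟩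

end LatticeIso

section MapsRays

variable [Zero 𝕜] [Preorder 𝕜] [DecidableEq ι] [DecidableEq κ] [DecidableEq μ]

/-- `MapsRays f T` says that `T` maps the open ray spanned by the basis vector `e_j` into the one
spanned by `e_{f j}`. It records the permutation part of a lattice isomorphism and forgets the
scaling factors. -/
def MapsRays (f : ι → κ) (T : (ι → 𝕜) → (κ → 𝕜)) : Prop :=
  ∀ j c, 0 < c → ∃ d, 0 < d ∧ T (Pi.single j c) = Pi.single (f j) d

namespace MapsRays

protected theorem id : MapsRays id (id : (ι → 𝕜) → (ι → 𝕜)) :=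
  fun _ c hc => ⟨c, hc, rfl⟩

theorem comp {f : ι → κ} {g : κ → μ} {S : (ι → 𝕜) → (κ → 𝕜)} {T : (κ → 𝕜) → (μ → 𝕜)}
    (hT : MapsRays g T) (hS : MapsRays f S) : MapsRays (g ∘ f) (T ∘ S) := fun j c hc => by
  obtain ⟨d, hd, hSd⟩ := hS j c hc
  obtain ⟨e, he, hTe⟩ := hT (f j) d hd
  exact ⟨e, he, by rw [Function.comp_apply, hSd, hTe, Function.comp_apply]⟩

end MapsRays

end MapsRays

theorem index_eq_of_single_eq_single [Zero 𝕜] [DecidableEq ι] {i j : ι} {c d : 𝕜} (hc : c ≠ 0)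
    (h : (Pi.single i c : ι → 𝕜) = Pi.single j d) : i = j := by
  by_contra hij
  have hi := congrFun h i
  rw [Pi.single_eq_same, Pi.single_eq_of_ne hij] at hi
  exact hc hi

theorem MapsRays.unique [Zero 𝕜] [One 𝕜] [PartialOrder 𝕜] [ZeroLEOneClass 𝕜] [NeZero (1 : 𝕜)]
    [DecidableEq ι] [DecidableEq κ] {f g : ι → κ} {T : (ι → 𝕜) → (κ → 𝕜)}
    (hf : MapsRays f T) (hg : MapsRays g T) : f = g := funext fun j => by
  obtain ⟨c, hc, hTc⟩ := hf j 1 zero_lt_one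
  obtain ⟨d, -, hTd⟩ := hg j 1 zero_lt_one
  exact index_eq_of_single_eq_single hc.ne' (hTc.symm.trans hTd)

theorem MapsRays.semiconjBy [Semiring 𝕜] [PartialOrder 𝕜] [ZeroLEOneClass 𝕜] [NeZero (1 : 𝕜)]
    [DecidableEq ι] {σ τ₁ τ₂ : Equiv.Perm ι} {T R₁ R₂ : (ι → 𝕜) ≃ₗ[𝕜] (ι → 𝕜)}
    (hT : MapsRays σ T) (hR₂ : MapsRays τ₂ R₂) (hR₁ : MapsRays τ₁ R₁)
    (h : SemiconjBy T R₂ R₁) : SemiconjBy σ τ₂ τ₁ := by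
  have hleft : MapsRays (σ ∘ τ₂) ⇑(T * R₂) := hT.comp hR₂
  have hright : MapsRays (τ₁ ∘ σ) ⇑(R₁ * T) := hR₁.comp hT
  exact DFunLike.coe_injective (hleft.unique (h.eq ▸ hright))

section Atoms

variable [DivisionRing 𝕜] [PartialOrder 𝕜] [DecidableEq ι] [DecidableEq κ]

theorem isRieszAtom_single (j : ι) {c : 𝕜} (hc : 0 < c) :
    IsRieszAtom 𝕜 (Pi.single j c : ι → 𝕜) := by
  refine ⟨Pi.single_pos.2 hc, fun y hy₀ hyc => ⟨y j / c, funext fun k => ?_⟩⟩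
  rcases eq_or_ne k j with rfl | hkj
  · rw [Pi.smul_apply, Pi.single_eq_same, smul_eq_mul, div_mul_cancel₀ _ hc.ne']
  · have hyk : y k ≤ 0 := by simpa only [Pi.single_eq_of_ne hkj] using hyc k
    rw [Pi.smul_apply, Pi.single_eq_of_ne hkj, smul_zero]
    exact le_antisymm hyk (hy₀ k)

theorem IsRieszAtom.exists_eq_single {x : ι → 𝕜} (hx : IsRieszAtom 𝕜 x) :
    ∃ i c, 0 < c ∧ x = Pi.single i c := by
  obtain ⟨hx₀, i, hi⟩ := Pi.lt_def.1 hx.1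
  have hle : Pi.single i (x i) ≤ x := update_le_iff.2 ⟨le_rfl, fun k _ => hx₀ k⟩
  obtain ⟨c, hc⟩ := hx.2 (Pi.single i (x i)) (Pi.single_nonneg.2 (hx₀ i)) hle
  have hxi : x i = c * x i := by
    simpa only [Pi.single_eq_same, Pi.smul_apply, smul_eq_mul] using congrFun hc i
  have hc₁ : c = 1 := (right_eq_mul₀ hi.ne').1 hxi
  exact ⟨i, x i, hi, by rw [hc, hc₁, one_smul]⟩

variable [IsStrictOrderedRing 𝕜]

theorem IsLatticeIso.exists_mapsRays {T : (ι → 𝕜) ≃ₗ[𝕜] (κ → 𝕜)} (hT : IsLatticeIso T) :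
    ∃ f : ι → κ, MapsRays f T := by
  have hbasis (j : ι) : ∃ i d, 0 < d ∧ T (Pi.single j 1) = Pi.single i d :=
    ((isRieszAtom_single j zero_lt_one).map hT).exists_eq_single
  choose f d hd hTd using hbasis
  refine ⟨f, fun j c hc => ⟨c * d j, mul_pos hc (hd j), ?_⟩⟩
  calc T (Pi.single j c) = T (c • Pi.single j 1) := by
        rw [← Pi.single_smul, smul_eq_mul, mul_one]
    _ = Pi.single (f j) (c * d j) := by rw [map_smul, hTd, ← Pi.single_smul, smul_eq_mul]

theorem IsLatticeIso.exists_equiv_mapsRays {T : (ι → 𝕜) ≃ₗ[𝕜] (κ → 𝕜)} (hT : IsLatticeIso T) :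
    ∃ σ : ι ≃ κ, MapsRays σ T := by
  obtain ⟨f, hf⟩ := hT.exists_mapsRays
  obtain ⟨g, hg⟩ := hT.symm.exists_mapsRays
  have hsymm_comp : T.symm ∘ T = id := funext T.symm_apply_apply
  have hcomp_symm : T ∘ T.symm = id := funext T.apply_symm_apply
  have hgf : g ∘ f = id := (hg.comp hf).unique (hsymm_comp ▸ .id)
  have hfg : f ∘ g = id := (hf.comp hg).unique (hcomp_symm ▸ .id)
  exact ⟨⟨f, g, congrFun hgf, congrFun hfg⟩, hf⟩

end Atoms

section PermutationOperators

variable [Semiring 𝕜]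

variable (𝕜) in
/-- The permutation operators `e_j ↦ e_{σ j}`, bundled as a homomorphism; the counterpart of
`permEquiv` for any index type and scalars. The inverse makes the action covariant. -/
def permHom : Equiv.Perm ι →* ((ι → 𝕜) ≃ₗ[𝕜] (ι → 𝕜)) where
  toFun σ := LinearEquiv.funCongrLeft 𝕜 𝕜 σ⁻¹
  map_one' := rfl
  map_mul' _ _ := rfl

theorem isLatticeIso_permHom [Preorder 𝕜] (σ : Equiv.Perm ι) : IsLatticeIso (permHom 𝕜 σ) :=
  fun x y => (σ⁻¹.forall_congr_right (q := fun i => x i ≤ y i)).symm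

theorem mapsRays_permHom [Preorder 𝕜] [DecidableEq ι] (σ : Equiv.Perm ι) :
    MapsRays σ (permHom 𝕜 σ) :=
  fun j c hc => ⟨c, hc, Pi.single_comp_equiv σ⁻¹ j c⟩

end PermutationOperators

variable [Field 𝕜] [LinearOrder 𝕜] [IsStrictOrderedRing 𝕜]

/-- The multiplication operators `x ↦ (m i * x i)` of strictly positive families, bundled as a
homomorphism; the counterpart of `diagEquiv` for any index type and ordered field. -/
def diagHom : (ι → {x : 𝕜 // 0 < x}) →* ((ι → 𝕜) ≃ₗ[𝕜] (ι → 𝕜)) where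
  toFun m := LinearEquiv.piCongrRight fun i =>
    LinearEquiv.smulOfNeZero 𝕜 𝕜 (m i : 𝕜) (m i).2.ne'
  map_one' := LinearEquiv.ext fun x => funext fun i => one_mul (x i)
  map_mul' m m' := LinearEquiv.ext fun x => funext fun i => mul_assoc (m i : 𝕜) (m' i) (x i)

theorem isLatticeIso_diagHom (m : ι → {x : 𝕜 // 0 < x}) : IsLatticeIso (diagHom m) :=
  fun _ _ => forall_congr' fun i => (mul_le_mul_iff_right₀ (m i).2).symm

theorem mapsRays_diagHom [DecidableEq ι] (m : ι → {x : 𝕜 // 0 < x}) : MapsRays id (diagHom m) :=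
  fun j c hc => ⟨m j * c, mul_pos (m j).2 hc,
    (Pi.single_op (fun i x => (m i : 𝕜) * x) (fun _ => mul_zero _) j c).symm⟩

theorem mapsRays_diagHom_conj_permHom [DecidableEq ι] (m : ι → {x : 𝕜 // 0 < x})
    (σ : Equiv.Perm ι) : MapsRays σ ⇑(diagHom m * permHom 𝕜 σ * (diagHom m)⁻¹) := by
  rw [← map_inv]
  exact ((mapsRays_diagHom m).comp (mapsRays_permHom σ)).comp (mapsRays_diagHom m⁻¹)

theorem stmt13_general {G : Type*} (ρ₁ ρ₂ : G → ((ι → 𝕜) ≃ₗ[𝕜] (ι → 𝕜)))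
    (m₁ m₂ : ι → {x : 𝕜 // 0 < x}) (π₁ π₂ : G → Equiv.Perm ι)
    (h₁ : ∀ s, ρ₁ s = diagHom m₁ * permHom 𝕜 (π₁ s) * (diagHom m₁)⁻¹)
    (h₂ : ∀ s, ρ₂ s = diagHom m₂ * permHom 𝕜 (π₂ s) * (diagHom m₂)⁻¹) :
    (∃ T : (ι → 𝕜) ≃ₗ[𝕜] (ι → 𝕜), IsLatticeIso T ∧ ∀ s, T * ρ₂ s = ρ₁ s * T) ↔
      ∃ σ : Equiv.Perm ι, ∀ s, σ * π₂ s = π₁ s * σ := by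
  classical
  obtain rfl : ρ₁ = _ := funext h₁
  obtain rfl : ρ₂ = _ := funext h₂
  constructor
  · rintro ⟨T, hT, hTρ⟩
    obtain ⟨σ, hσ⟩ := hT.exists_equiv_mapsRays
    exact ⟨σ, fun s => hσ.semiconjBy (mapsRays_diagHom_conj_permHom m₂ (π₂ s))
      (mapsRays_diagHom_conj_permHom m₁ (π₁ s)) (hTρ s)⟩
  · rintro ⟨σ, hσ⟩
    refine ⟨diagHom m₁ * permHom 𝕜 σ * (diagHom m₂)⁻¹, ?_, fun s => ?_⟩
    · exact (isLatticeIso_diagHom m₂).symm.trans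
        ((isLatticeIso_permHom σ).trans (isLatticeIso_diagHom m₁))
    · have hperm : SemiconjBy (permHom 𝕜 σ) (permHom 𝕜 (π₂ s)) (permHom 𝕜 (π₁ s)) :=
        SemiconjBy.map (hσ s) (permHom 𝕜)
      have hdiag₂ := (SemiconjBy.conj_mk (diagHom m₂) (permHom 𝕜 (π₂ s))).inv_symm_left
      exact ((SemiconjBy.conj_mk (diagHom m₁) (permHom 𝕜 (π₁ s))).mul_left hperm).mul_left hdiag₂

end CoordinateSpaces

/-- Two positive representations `ρ¹ ∼ (m₁, π¹)` and `ρ² ∼ (m₂, π²)` of a finite group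
in `ℝⁿ` are order equivalent if and only if the permutation representations `π¹` and
`π²` are permutation equivalent. -/
theorem stmt13 {G : Type*} [Group G] [Finite G] (n : ℕ)
    (ρ₁ ρ₂ : G →* ((Fin n → ℝ) ≃ₗ[ℝ] (Fin n → ℝ)))
    (m₁ m₂ : Fin n → PosReal) (π₁ π₂ : G →* Equiv.Perm (Fin n))
    (h₁ : ∀ s : G, ρ₁ s = diagEquiv n m₁ * permEquiv n (π₁ s) * (diagEquiv n m₁)⁻¹)
    (h₂ : ∀ s : G, ρ₂ s = diagEquiv n m₂ * permEquiv n (π₂ s) * (diagEquiv n m₂)⁻¹) :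
    (∃ T : (Fin n → ℝ) ≃ₗ[ℝ] (Fin n → ℝ),
      (∀ x y : Fin n → ℝ, x ≤ y ↔ T x ≤ T y) ∧ ∀ s : G, T * ρ₂ s = ρ₁ s * T) ↔
    (∃ σ : Equiv.Perm (Fin n), ∀ s : G, σ * π₂ s = π₁ s * σ) :=
  -- `diagEquiv n` and `permEquiv n` agree definitionally with `diagHom` and `permHom ℝ`.
  stmt13_general ρ₁ ρ₂ m₁ m₂ π₁ π₂ h₁ h₂
end
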